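/- Let s > 0 and t > 0 be real numbers with s ≠ t, let i ≥ 0 be an integer, and let q ≥ −i be a real number. Then ((−1)^i/(t−s)) · ∫_s^t ψ^{(i)}(u) du ≤ (−1)^i ψ^{(i)}(L_q(s,t)), where ψ^{(0)} = ψ. -/

import Mathlib

/-!
Write `f = (-1)^i ψ⁽ⁱ⁾` and let `S k x = ∑ₙ (x + n)^{-(k+2)}`. On `(0, ∞)` one has
`f' = (i+1)! · S i`. The key fact is that `x^{i+1} S i x` is nonincreasing, which amounts to
`(i+1) S i x ≤ (i+2) x S (i+1) x` (`polyS_ineq`); this is proved on partial sums, where the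
difference of the two sides dominates a telescoping sum.

Consequently `u^{1-q} f'(u)` is nonincreasing for every `q ≥ -i`. Let `H q` be the primitive of
`u^{q-1}` (`powPrim`), that is, `u^q / q`, or `log u` when `q = 0`. Then
`(f - c · H q)' = u^{q-1} (u^{1-q} f'(u) - c)`, so for `c = m^{1-q} f'(m)` the function
`f - c · H q` is maximal at `m` (`tangent_bound`). Since `L_q(s,t)` is exactly the number `m` for
which `H q m` is the mean of `H q` over the interval (`integral_powPrim`), averaging this bound at
`m = L_q(s,t)` yields the theorem.

The series for `ψ'` comes from `ψ(y) - ψ(x) = ∑ₙ (1/(x+n) - 1/(y+n))`, which follows from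
`ψ(x+1) = ψ(x) + 1/x` and the monotonicity of `ψ` (log-convexity of `Γ`).
-/

open Real

/-- The digamma function `ψ = Γ′/Γ`. -/
noncomputable def digamma (x : ℝ) : ℝ := deriv Real.Gamma x / Real.Gamma x

/-- The `i`-th derivative of the digamma function, `ψ⁽ⁱ⁾`, with `ψ⁽⁰⁾ = ψ`. -/
noncomputable def polygamma (i : ℕ) : ℝ → ℝ := deriv^[i] digamma

/-- The generalized logarithmic mean `L_p(a,b)`. -/
noncomputable def genLogMean (p a b : ℝ) : ℝ :=
  if p = -1 then (b - a) / (Real.log b - Real.log a)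
  else if p = 0 then (1 / Real.exp 1) * (b ^ b / a ^ a) ^ (1 / (b - a))
  else ((b ^ (p + 1) - a ^ (p + 1)) / ((p + 1) * (b - a))) ^ (1 / p)


open Filter Topology Set

/-! ### The series of the polygamma functions -/

/-- The Hurwitz-type series `∑ₙ 1 / (x + n)^(k+2)`, equal to `|ψ⁽ᵏ⁺¹⁾(x)| / (k+1)!` for `x > 0`. -/
noncomputable def polyS (k : ℕ) (x : ℝ) : ℝ := ∑' n : ℕ, 1 / (x + n) ^ (k + 2)

lemma summable_polyS (k : ℕ) {x : ℝ} (hx : 0 < x) :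
    Summable (fun n : ℕ => 1 / (x + n) ^ (k + 2)) := by
  have h := (Real.summable_one_div_nat_add_rpow x ((k + 2 : ℕ) : ℝ)).2
    (by push_cast; linarith [(Nat.cast_nonneg k : (0 : ℝ) ≤ k)])
  refine h.congr fun n => ?_
  rw [Real.rpow_natCast, abs_of_pos (by positivity), add_comm]

lemma polyS_nonneg (k : ℕ) {x : ℝ} (hx : 0 < x) : 0 ≤ polyS k x :=
  tsum_nonneg fun n => by positivity

lemma ne_neg_nat {x : ℝ} (hx : 0 < x) (m : ℕ) : x ≠ -m := by
  have : (0 : ℝ) ≤ m := m.cast_nonneg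
  linarith

lemma digamma_add_one {x : ℝ} (hx : 0 < x) : digamma (x + 1) = digamma x + 1 / x := by
  have hG : 0 < Real.Gamma x := Real.Gamma_pos_of_pos hx
  have hd : HasDerivAt Real.Gamma (deriv Real.Gamma x) x :=
    (Real.differentiableAt_Gamma (ne_neg_nat hx)).hasDerivAt
  have hd1 : HasDerivAt Real.Gamma (deriv Real.Gamma (x + 1)) (x + 1) :=
    (Real.differentiableAt_Gamma (ne_neg_nat (by linarith))).hasDerivAt
  have h1 : HasDerivAt (fun y => Real.Gamma (y + 1)) (deriv Real.Gamma (x + 1)) x :=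
    hd1.comp_add_const x 1
  have h2 : HasDerivAt (fun y => y * Real.Gamma y)
      (1 * Real.Gamma x + x * deriv Real.Gamma x) x := (hasDerivAt_id x).mul hd
  have h3 : (fun y => Real.Gamma (y + 1)) =ᶠ[𝓝 x] fun y => y * Real.Gamma y := by
    filter_upwards [eventually_gt_nhds hx] with y hy
    exact Real.Gamma_add_one hy.ne'
  have h4 := h1.unique (h2.congr_of_eventuallyEq h3)
  unfold digamma
  rw [h4, Real.Gamma_add_one hx.ne']
  field_simp
  ring

lemma digamma_add_nat {x : ℝ} (hx : 0 < x) (N : ℕ) :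
    digamma (x + N) = digamma x + ∑ n ∈ Finset.range N, 1 / (x + n) := by
  induction N with
  | zero => simp
  | succ N ih =>
    rw [Finset.sum_range_succ, ← add_assoc, ← ih, ← digamma_add_one (by positivity)]
    push_cast
    ring_nf

lemma digamma_monotoneOn : MonotoneOn digamma (Ioi 0) := by
  have hd : ∀ x ∈ Ioi (0 : ℝ), HasDerivAt (Real.log ∘ Real.Gamma) (digamma x) x := by
    intro x hx
    have hG : 0 < Real.Gamma x := Real.Gamma_pos_of_pos hx
    exact (Real.differentiableAt_Gamma (ne_neg_nat hx)).hasDerivAt.log hG.ne'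
  have h := Real.convexOn_log_Gamma.monotoneOn_deriv fun x hx => (hd x hx).differentiableAt
  exact h.congr fun x hx => (hd x hx).deriv

lemma digamma_shift_tendsto {x y : ℝ} (hx : 0 < x) (hxy : x ≤ y) :
    Tendsto (fun N : ℕ => digamma (y + N) - digamma (x + N)) atTop (𝓝 0) := by
  obtain ⟨M, hM⟩ := exists_nat_ge (y - x)
  -- squeeze: `ψ(x+N) ≤ ψ(y+N) ≤ ψ(x+N+M) ≤ ψ(x+N) + M/(x+N)`
  have hlim : Tendsto (fun N : ℕ => (M : ℝ) * (1 / (x + N))) atTop (𝓝 0) := by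
    have h1 : Tendsto (fun N : ℕ => x + (N : ℝ)) atTop atTop :=
      tendsto_atTop_add_const_left _ _ tendsto_natCast_atTop_atTop
    simpa using (h1.inv_tendsto_atTop.const_mul (M : ℝ))
  refine squeeze_zero (fun N => ?_) (fun N => ?_) hlim
  · have hN : (0 : ℝ) ≤ N := N.cast_nonneg
    exact sub_nonneg.2 (digamma_monotoneOn (mem_Ioi.2 (by linarith)) (mem_Ioi.2 (by linarith))
      (by linarith))
  · have hN : (0 : ℝ) ≤ N := N.cast_nonneg
    have hM0 : (0 : ℝ) ≤ M := M.cast_nonneg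
    have h1 : digamma (y + N) ≤ digamma (x + N + M) :=
      digamma_monotoneOn (mem_Ioi.2 (by linarith)) (mem_Ioi.2 (by linarith)) (by linarith)
    rw [digamma_add_nat (by linarith : 0 < x + N) M] at h1
    have h2 : ∑ n ∈ Finset.range M, 1 / (x + N + n) ≤ ∑ _n ∈ Finset.range M, 1 / (x + N) := by
      refine Finset.sum_le_sum fun n _ => ?_
      have : (0 : ℝ) ≤ n := n.cast_nonneg
      exact one_div_le_one_div_of_le (by linarith) (by linarith)
    rw [Finset.sum_const, Finset.card_range, nsmul_eq_mul] at h2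
    linarith

lemma hasSum_digamma_sub {x y : ℝ} (hx : 0 < x) (hxy : x ≤ y) :
    HasSum (fun n : ℕ => 1 / (x + n) - 1 / (y + n)) (digamma y - digamma x) := by
  rw [hasSum_iff_tendsto_nat_of_nonneg]
  · have h := (tendsto_const_nhds (x := digamma y - digamma x)).sub (digamma_shift_tendsto hx hxy)
    rw [sub_zero] at h
    refine h.congr fun N => ?_
    rw [digamma_add_nat hx, digamma_add_nat (by linarith), Finset.sum_sub_distrib]
    ring
  · intro n
    have : (0 : ℝ) ≤ n := n.cast_nonneg
    exact sub_nonneg.2 (one_div_le_one_div_of_le (by linarith) (by linarith))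

lemma hasDerivAt_one_div_pow (p n : ℕ) {x : ℝ} (hx : 0 < x) :
    HasDerivAt (fun z : ℝ => 1 / (z + n) ^ p) (-(p : ℝ) * (1 / (x + n) ^ (p + 1))) x := by
  have hxn : 0 < x + n := by positivity
  have h := (((hasDerivAt_id x).add_const (n : ℝ)).pow p).inv (pow_ne_zero p hxn.ne')
  simp only [id] at h
  convert! h using 1
  · funext z; simp
  · rcases p with _ | p
    · simp
    · simp only [Nat.add_sub_cancel, Pi.pow_apply]
      field_simp
      ring

lemma hasDerivAt_digamma {x : ℝ} (hx : 0 < x) : HasDerivAt digamma (polyS 0 x) x := by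
  have hx2 : 0 < x / 2 := by linarith
  have hmem : x ∈ Ioi (x / 2) := mem_Ioi.2 (by linarith)
  have key := hasDerivAt_tsum_of_isPreconnected
    (g := fun (n : ℕ) (z : ℝ) => 1 / (x / 2 + n) - 1 / (z + n))
    (g' := fun (n : ℕ) (z : ℝ) => 1 / (z + n) ^ 2)
    (summable_polyS 0 hx2) isOpen_Ioi isPreconnected_Ioi
    (fun n y hy => by
      have h := (hasDerivAt_one_div_pow 1 n (hx2.trans hy)).const_sub (1 / (x / 2 + n))
      simpa using h)
    (fun n y hy => by
      have hy' : x / 2 < y := hy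
      have hn : (0 : ℝ) ≤ n := n.cast_nonneg
      rw [Real.norm_of_nonneg (by positivity)]
      exact one_div_le_one_div_of_le (by positivity)
        (pow_le_pow_left₀ (by positivity) (by linarith) 2))
    hmem (hasSum_digamma_sub hx2 (by linarith)).summable hmem
  have h2 := key.const_add (digamma (x / 2))
  refine h2.congr_of_eventuallyEq ?_
  filter_upwards [isOpen_Ioi.mem_nhds hmem] with z hz
  rw [(hasSum_digamma_sub hx2 (le_of_lt hz)).tsum_eq]
  ring

lemma hasDerivAt_polyS (k : ℕ) {x : ℝ} (hx : 0 < x) :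
    HasDerivAt (polyS k) (-((k : ℝ) + 2) * polyS (k + 1) x) x := by
  have hx2 : 0 < x / 2 := by linarith
  have hmem : x ∈ Ioi (x / 2) := mem_Ioi.2 (by linarith)
  have key := hasDerivAt_tsum_of_isPreconnected
    (g := fun (n : ℕ) (z : ℝ) => 1 / (z + n) ^ (k + 2))
    (g' := fun (n : ℕ) (z : ℝ) => -((k : ℝ) + 2) * (1 / (z + n) ^ (k + 1 + 2)))
    ((summable_polyS (k + 1) hx2).mul_left ((k : ℝ) + 2)) isOpen_Ioi isPreconnected_Ioi
    (fun n y hy => by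
      have h := hasDerivAt_one_div_pow (k + 2) n (hx2.trans hy)
      push_cast at h
      exact h)
    (fun n y hy => by
      have hy' : x / 2 < y := hy
      have hy0 : 0 < y := by linarith
      have hn : (0 : ℝ) ≤ n := n.cast_nonneg
      rw [neg_mul, norm_neg, Real.norm_of_nonneg (by positivity)]
      refine mul_le_mul_of_nonneg_left ?_ (by positivity)
      exact one_div_le_one_div_of_le (by positivity)
        (pow_le_pow_left₀ (by positivity) (by linarith) _))
    hmem (summable_polyS k hx) hmem
  rw [tsum_mul_left] at key
  exact key

lemma polygamma_succ_eq (k : ℕ) : ∀ {x : ℝ}, 0 < x →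
    polygamma (k + 1) x = (-1) ^ k * (k + 1).factorial * polyS k x := by
  induction k with
  | zero =>
    intro x hx
    have : polygamma 1 x = deriv digamma x := rfl
    rw [this, (hasDerivAt_digamma hx).deriv]
    simp
  | succ k ih =>
    intro x hx
    have h0 : polygamma (k + 1 + 1) x = deriv (polygamma (k + 1)) x := by
      unfold polygamma
      rw [Function.iterate_succ_apply']
    have h1 : polygamma (k + 1) =ᶠ[𝓝 x]
        fun z => (-1) ^ k * (k + 1).factorial * polyS k z := by
      filter_upwards [eventually_gt_nhds hx] with z hz using ih hz
    rw [h0, h1.deriv_eq, ((hasDerivAt_polyS k hx).const_mul _).deriv, Nat.factorial_succ (k + 1)]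
    push_cast
    ring

lemma hasDerivAt_signed_polygamma (i : ℕ) {x : ℝ} (hx : 0 < x) :
    HasDerivAt (fun z => (-1) ^ i * polygamma i z) ((i + 1).factorial * polyS i x) x := by
  rcases i with _ | k
  · simpa [polygamma] using hasDerivAt_digamma hx
  · have h1 : (fun z => (-1) ^ (k + 1) * polygamma (k + 1) z) =ᶠ[𝓝 x]
        fun z => (-((k + 1).factorial : ℝ)) * polyS k z := by
      filter_upwards [eventually_gt_nhds hx] with z hz
      rw [polygamma_succ_eq k hz]
      have : ((-1 : ℝ)) ^ k * (-1) ^ k = 1 := by rw [← mul_pow]; simp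
      rw [pow_succ]
      linear_combination (-((k + 1).factorial : ℝ) * polyS k z) * this
    refine HasDerivAt.congr_of_eventuallyEq ?_ h1
    convert! (hasDerivAt_polyS k hx).const_mul (-((k + 1).factorial : ℝ)) using 1
    rw [Nat.factorial_succ (k + 1)]
    push_cast
    ring

/-! ### Monotonicity of `x^(i+1) |ψ⁽ⁱ⁺¹⁾(x)|` -/

/-- Convexity of `y ↦ y^(-p)` at `y`, evaluated at `y - 1`; written here with `z = y - 1`. -/
lemma inv_pow_convex (p : ℕ) {z : ℝ} (hz : 0 < z) :
    1 / (z + 1) ^ p + p * (1 / (z + 1) ^ (p + 1)) ≤ 1 / z ^ p := by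
  have hb : 1 + (p : ℝ) * (1 / (z + 1)) ≤ (1 + 1 / (z + 1)) ^ p :=
    one_add_mul_le_pow (by have : 0 < 1 / (z + 1) := by positivity
                           linarith) p
  have h2 : (1 + 1 / (z + 1)) ≤ (z + 1) / z := by
    rw [le_div_iff₀ hz]
    field_simp
    nlinarith
  have h3 : (1 + 1 / (z + 1)) ^ p ≤ ((z + 1) / z) ^ p := pow_le_pow_left₀ (by positivity) h2 p
  have h4 : 1 / (z + 1) ^ p + p * (1 / (z + 1) ^ (p + 1))
      = (1 + (p : ℝ) * (1 / (z + 1))) * (1 / (z + 1) ^ p) := by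
    rw [pow_succ]
    field_simp
  have h5 : 1 / z ^ p = ((z + 1) / z) ^ p * (1 / (z + 1) ^ p) := by
    rw [div_pow]; field_simp
  rw [h4, h5]
  exact mul_le_mul_of_nonneg_right (hb.trans h3) (by positivity)

lemma polyS_ineq (k : ℕ) {x : ℝ} (hx : 0 < x) :
    ((k : ℝ) + 1) * polyS k x ≤ (k + 2) * x * polyS (k + 1) x := by
  have hs : HasSum (fun n : ℕ => (k + 2) * x * (1 / (x + n) ^ (k + 1 + 2))
      - ((k : ℝ) + 1) * (1 / (x + n) ^ (k + 2)))
      ((k + 2) * x * polyS (k + 1) x - ((k : ℝ) + 1) * polyS k x) :=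
    ((summable_polyS (k + 1) hx).hasSum.mul_left _).sub ((summable_polyS k hx).hasSum.mul_left _)
  have hpart : ∀ N : ℕ, ((N : ℝ) + 1) * (1 / (x + N) ^ (k + 2)) ≤
      ∑ n ∈ Finset.range (N + 1), ((k + 2) * x * (1 / (x + n) ^ (k + 1 + 2))
        - ((k : ℝ) + 1) * (1 / (x + n) ^ (k + 2))) := by
    intro N
    induction N with
    | zero =>
      simp only [zero_add, Finset.sum_range_one, Nat.cast_zero, add_zero]
      apply le_of_eq
      field_simp
      ring
    | succ N ih =>
      rw [Finset.sum_range_succ]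
      have hz : 0 < x + N := by positivity
      have hc := mul_le_mul_of_nonneg_left (inv_pow_convex (k + 2) hz)
        (by positivity : (0 : ℝ) ≤ N + 1)
      have hxe : x * (1 / (x + (N + 1 : ℕ)) ^ (k + 1 + 2)) =
          1 / (x + N + 1) ^ (k + 2) - (N + 1) * (1 / (x + N + 1) ^ (k + 2 + 1)) := by
        push_cast
        rw [← add_assoc]
        field_simp
        ring
      have hye : (1 / (x + (N + 1 : ℕ)) ^ (k + 2)) = 1 / (x + N + 1) ^ (k + 2) := by
        push_cast
        rw [← add_assoc]
      rw [mul_assoc, hxe, hye]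
      push_cast at hc ⊢
      linarith
  have := ge_of_tendsto' ((tendsto_add_atTop_iff_nat 1).2 hs.tendsto_sum_nat)
    (fun N => le_trans (by positivity) (hpart N) : ∀ N : ℕ, (0 : ℝ) ≤ _)
  linarith

lemma pow_mul_polyS_antitone (i : ℕ) :
    AntitoneOn (fun x => x ^ (i + 1) * polyS i x) (Ioi (0 : ℝ)) := by
  have hd : ∀ x ∈ Ioi (0 : ℝ), HasDerivAt (fun x => x ^ (i + 1) * polyS i x)
      (((i : ℝ) + 1) * x ^ i * polyS i x + x ^ (i + 1) * (-((i : ℝ) + 2) * polyS (i + 1) x)) x := by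
    intro x hx
    have h := (hasDerivAt_pow (i + 1) x).mul (hasDerivAt_polyS i hx)
    convert! h using 1
    push_cast
    rfl
  refine antitoneOn_of_deriv_nonpos (convex_Ioi 0)
    (fun x hx => (hd x hx).continuousAt.continuousWithinAt) ?_ ?_
  · rw [interior_Ioi]
    exact fun x hx => (hd x hx).differentiableAt.differentiableWithinAt
  · rw [interior_Ioi]
    intro x hx
    have hx' : 0 < x := hx
    rw [(hd x hx).deriv]
    have := mul_le_mul_of_nonneg_left (polyS_ineq i hx') (by positivity : 0 ≤ x ^ i)
    rw [pow_succ]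
    linarith

/-! ### The tangent inequality and the logarithmic mean -/

/-- The primitive of `u ↦ u^(q-1)` on `(0, ∞)`: `u^q / q`, or `log u` when `q = 0`. -/
noncomputable def powPrim (q u : ℝ) : ℝ := if q = 0 then Real.log u else u ^ q / q

lemma hasDerivAt_powPrim (q : ℝ) {u : ℝ} (hu : 0 < u) :
    HasDerivAt (powPrim q) (u ^ (q - 1)) u := by
  unfold powPrim
  by_cases hq : q = 0
  · simp only [hq, if_true, zero_sub, Real.rpow_neg_one]
    exact Real.hasDerivAt_log hu.ne'
  · simp only [hq, if_false]
    convert! (Real.hasDerivAt_rpow_const (p := q) (Or.inl hu.ne')).div_const q using 1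
    field_simp

/-- The derivative of `(-1)^i ψ⁽ⁱ⁾` times `u^(1-q)` is nonincreasing for `q ≥ -i`. -/
lemma ratio_antitone (i : ℕ) (q : ℝ) (hq : -(i : ℝ) ≤ q) :
    AntitoneOn (fun u => u ^ (1 - q) * ((i + 1).factorial * polyS i u)) (Ioi (0 : ℝ)) := by
  intro u hu v hv huv
  have hu' : 0 < u := hu
  have hv' : 0 < v := hv
  have e : ∀ w : ℝ, 0 < w → w ^ (1 - q) * ((i + 1).factorial * polyS i w) =
      (i + 1).factorial * (w ^ (-(q + i)) * (w ^ (i + 1) * polyS i w)) := by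
    intro w hw
    have : w ^ (1 - q) = w ^ (-(q + i)) * w ^ (i + 1) := by
      rw [← Real.rpow_natCast, ← Real.rpow_add hw]
      congr 1
      push_cast
      ring
    rw [this]
    ring
  simp only
  rw [e u hu', e v hv']
  refine mul_le_mul_of_nonneg_left ?_ (by positivity)
  refine mul_le_mul ?_ (pow_mul_polyS_antitone i hu hv huv) ?_ (by positivity)
  · exact Real.rpow_le_rpow_of_nonpos hu' huv (by linarith)
  · exact mul_nonneg (by positivity) (polyS_nonneg i (mem_Ioi.1 hv))

/-- The function `(-1)^i ψ⁽ⁱ⁾` lies below its tangent at `m`, in the variable `powPrim q u`. -/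
lemma tangent_bound (i : ℕ) (q : ℝ) (hq : -(i : ℝ) ≤ q) {m u : ℝ} (hm : 0 < m) (hu : 0 < u) :
    (-1) ^ i * polygamma i u ≤ (-1) ^ i * polygamma i m +
      (m ^ (1 - q) * ((i + 1).factorial * polyS i m)) * (powPrim q u - powPrim q m) := by
  set c := m ^ (1 - q) * ((i + 1).factorial * polyS i m) with hc
  have hd : ∀ x : ℝ, 0 < x → HasDerivAt (fun x => (-1) ^ i * polygamma i x - c * powPrim q x)
      (x ^ (q - 1) * (x ^ (1 - q) * ((i + 1).factorial * polyS i x) - c)) x := by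
    intro x hx
    convert! (hasDerivAt_signed_polygamma i hx).sub ((hasDerivAt_powPrim q hx).const_mul c) using 1
    rw [mul_sub, ← mul_assoc, ← Real.rpow_add hx]
    simp
    ring
  have hR := ratio_antitone i q hq
  rcases le_total u m with hum | hum
  · have hpos : ∀ x ∈ Icc u m, 0 < x := fun x hx => hu.trans_le hx.1
    have hmono := monotoneOn_of_deriv_nonneg (convex_Icc u m)
      (fun x hx => (hd x (hpos x hx)).continuousAt.continuousWithinAt)
      (fun x hx => (hd x (hpos x (interior_subset hx))).differentiableAt.differentiableWithinAt)
      (fun x hx => by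
        have hx' := interior_subset hx
        have h0 := hpos x hx'
        rw [(hd x h0).deriv]
        exact mul_nonneg (by positivity) (sub_nonneg.2 (hR h0 hm hx'.2)))
    have := hmono (left_mem_Icc.2 hum) (right_mem_Icc.2 hum) hum
    simp only at this
    linarith
  · have hpos : ∀ x ∈ Icc m u, 0 < x := fun x hx => hm.trans_le hx.1
    have hanti := antitoneOn_of_deriv_nonpos (convex_Icc m u)
      (fun x hx => (hd x (hpos x hx)).continuousAt.continuousWithinAt)
      (fun x hx => (hd x (hpos x (interior_subset hx))).differentiableAt.differentiableWithinAt)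
      (fun x hx => by
        have hx' := interior_subset hx
        have h0 := hpos x hx'
        rw [(hd x h0).deriv]
        exact mul_nonpos_of_nonneg_of_nonpos (by positivity) (sub_nonpos.2 (hR hm h0 hx'.1)))
    have := hanti (left_mem_Icc.2 hum) (right_mem_Icc.2 hum) hum
    simp only at this
    linarith

lemma zero_notMem_uIcc {s t : ℝ} (hs : 0 < s) (ht : 0 < t) : (0 : ℝ) ∉ uIcc s t := by
  intro h
  have := (lt_min hs ht).trans_le h.1
  exact lt_irrefl _ this

lemma pos_of_mem_uIcc {s t u : ℝ} (hs : 0 < s) (ht : 0 < t) (hu : u ∈ uIcc s t) : 0 < u :=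
  (lt_min hs ht).trans_le hu.1

lemma rpow_mean_pos {s t q : ℝ} (hs : 0 < s) (ht : 0 < t) (hst : s ≠ t) (hq : q ≠ -1) :
    0 < (t ^ (q + 1) - s ^ (q + 1)) / ((q + 1) * (t - s)) := by
  have aux : ∀ a b : ℝ, 0 < a → 0 < b → a < b →
      0 < (b ^ (q + 1) - a ^ (q + 1)) / ((q + 1) * (b - a)) := by
    intro a b ha hb hab
    have h : 0 < ∫ x in a..b, x ^ q := by
      refine intervalIntegral.intervalIntegral_pos_of_pos_on ?_ ?_ hab
      · exact intervalIntegral.intervalIntegrable_rpow (Or.inr (zero_notMem_uIcc ha hb))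
      · intro x hx
        exact Real.rpow_pos_of_pos (ha.trans hx.1) _
    rw [integral_rpow (Or.inr ⟨hq, zero_notMem_uIcc ha hb⟩)] at h
    rw [← div_div]
    exact div_pos h (by linarith)
  rcases lt_or_gt_of_ne hst with h | h
  · exact aux s t hs ht h
  · have := aux t s ht hs h
    rwa [← neg_sub (t ^ (q + 1)), ← neg_sub t s, mul_neg, neg_div_neg_eq] at this

lemma log_mean_pos {s t : ℝ} (hs : 0 < s) (ht : 0 < t) (hst : s ≠ t) :
    0 < (t - s) / (Real.log t - Real.log s) := by
  rcases lt_or_gt_of_ne hst with h | h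
  · exact div_pos (by linarith) (sub_pos.2 (Real.log_lt_log hs h))
  · exact div_pos_of_neg_of_neg (by linarith) (sub_neg.2 (Real.log_lt_log ht h))

lemma genLogMean_pos {s t : ℝ} (q : ℝ) (hs : 0 < s) (ht : 0 < t) (hst : s ≠ t) :
    0 < genLogMean q s t := by
  unfold genLogMean
  split_ifs with h1 h2
  · exact log_mean_pos hs ht hst
  · positivity
  · exact Real.rpow_pos_of_pos (rpow_mean_pos hs ht hst h1) _

/-- `genLogMean q s t` is the quasi-arithmetic mean of the interval with generator `powPrim q`. -/
lemma integral_powPrim {s t : ℝ} (q : ℝ) (hs : 0 < s) (ht : 0 < t) (hst : s ≠ t) :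
    ∫ u in s..t, powPrim q u = (t - s) * powPrim q (genLogMean q s t) := by
  have hts : t - s ≠ 0 := sub_ne_zero.2 hst.symm
  unfold powPrim genLogMean
  by_cases h1 : q = -1
  · subst h1
    have hl := log_mean_pos hs ht hst
    have hl0 : Real.log t - Real.log s ≠ 0 := by
      intro h
      rw [h, div_zero] at hl
      exact lt_irrefl _ hl
    have hn : (-1 : ℝ) ≠ 0 := by norm_num
    simp only [hn, if_false, if_true]
    rw [intervalIntegral.integral_div]
    simp only [Real.rpow_neg_one]
    rw [integral_inv (zero_notMem_uIcc hs ht), Real.log_div ht.ne' hs.ne']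
    field_simp
  · by_cases h2 : q = 0
    · subst h2
      simp only [h1, if_false, if_true]
      rw [integral_log, Real.log_mul (by positivity) (by positivity),
        Real.log_rpow (by positivity),
        Real.log_div (x := t ^ t) (by positivity) (by positivity), Real.log_rpow ht, Real.log_rpow hs,
        Real.log_div one_ne_zero (by positivity), Real.log_exp, Real.log_one]
      field_simp
      ring
    · simp only [h1, h2, if_false]
      rw [intervalIntegral.integral_div, integral_rpow (Or.inr ⟨h1, zero_notMem_uIcc hs ht⟩),
        ← Real.rpow_mul (rpow_mean_pos hs ht hst h1).le, one_div_mul_cancel h2, Real.rpow_one]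
      have : q + 1 ≠ 0 := fun h => h1 (by linarith)
      field_simp

/-- Integrated form of `tangent_bound`, for an increasing interval. -/
lemma integral_bound (i : ℕ) (q : ℝ) (hq : -(i : ℝ) ≤ q) {a b m : ℝ} (ha : 0 < a) (hb : 0 < b)
    (hab : a < b) (hm : 0 < m) (hmean : ∫ u in a..b, powPrim q u = (b - a) * powPrim q m) :
    ∫ u in a..b, (-1) ^ i * polygamma i u ≤ (b - a) * ((-1) ^ i * polygamma i m) := by
  set c := m ^ (1 - q) * ((i + 1).factorial * polyS i m) with hc
  have hi1 : IntervalIntegrable (fun u => (-1) ^ i * polygamma i u) MeasureTheory.volume a b :=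
    ContinuousOn.intervalIntegrable fun u hu =>
      (hasDerivAt_signed_polygamma i
        (pos_of_mem_uIcc ha hb hu)).continuousAt.continuousWithinAt
  have hi2 : IntervalIntegrable (powPrim q) MeasureTheory.volume a b :=
    ContinuousOn.intervalIntegrable fun u hu =>
      (hasDerivAt_powPrim q (pos_of_mem_uIcc ha hb hu)).continuousAt.continuousWithinAt
  have hi3 : IntervalIntegrable (fun u => c * (powPrim q u - powPrim q m))
      MeasureTheory.volume a b :=
    (hi2.sub intervalIntegrable_const).const_mul c
  have h := intervalIntegral.integral_mono_on hab.le hi1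
    (intervalIntegrable_const.add hi3)
    (fun u hu => tangent_bound i q hq hm (ha.trans_le hu.1))
  refine h.trans (le_of_eq ?_)
  rw [intervalIntegral.integral_add intervalIntegrable_const hi3,
    intervalIntegral.integral_const_mul c,
    intervalIntegral.integral_sub hi2 intervalIntegrable_const, hmean,
    intervalIntegral.integral_const, intervalIntegral.integral_const]
  simp

theorem stmt_7 (s t : ℝ) (hs : 0 < s) (ht : 0 < t) (hst : s ≠ t)
    (i : ℕ) (q : ℝ) (hq : -(i : ℝ) ≤ q) :
    (-1 : ℝ) ^ i / (t - s) * ∫ u in s..t, polygamma i u ≤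
      (-1 : ℝ) ^ i * polygamma i (genLogMean q s t) := by
  have hm := genLogMean_pos q hs ht hst
  have hmean := integral_powPrim q hs ht hst
  rw [div_mul_eq_mul_div, ← intervalIntegral.integral_const_mul]
  rcases lt_or_gt_of_ne hst with h | h
  · rw [div_le_iff₀ (by linarith), mul_comm _ (t - s)]
    exact integral_bound i q hq hs ht h hm hmean
  · have hmean' : ∫ u in t..s, powPrim q u = (s - t) * powPrim q (genLogMean q s t) := by
      rw [intervalIntegral.integral_symm, hmean]
      ring
    have := integral_bound i q hq ht hs h hm hmean'
    rw [intervalIntegral.integral_symm, div_le_iff_of_neg (by linarith)]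
    linarith
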